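/- For every integer n ≥ 0 the second moment of the area of the random convex chain satisfies E[vol(T_n)²] = 1/4 − (9n² + 53n + 72)/(54(n+1)(n+2)(n+3)) − (9n+8)·H_{n+2}/(27(n+1)(n+2)) + (H_{n+2}² + H^{(2)}_{n+2})/(9(n+1)(n+2)); equivalently E[V_n²] = 1 − (18n² + 106n + 144)/(27(n+1)(n+2)(n+3)) − (36n+32)·H_{n+2}/(27(n+1)(n+2)) + 4(H_{n+2}² + H^{(2)}_{n+2})/(9(n+1)(n+2)). -/

import Mathlib

open MeasureTheory

noncomputable section

/-- The triangle with vertices (0,0), (1,0), (0,1). -/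
def T : Set (ℝ × ℝ) := convexHull ℝ {(0, 0), (1, 0), (0, 1)}

/-- The uniform distribution on `T`: twice Lebesgue measure restricted to `T`. -/
def μT : Measure (ℝ × ℝ) := (2 : ENNReal) • (volume.restrict T)

/-- Joint law of `n` independent uniform points in `T`. -/
def P (n : ℕ) : Measure (Fin n → ℝ × ℝ) := Measure.pi fun _ => μT

/-- The random convex chain: convex hull of the points together with `(1,0)` and `(0,1)`. -/
def Tchain (n : ℕ) (ω : Fin n → ℝ × ℝ) : Set (ℝ × ℝ) :=
  convexHull ℝ (Set.range ω ∪ {(1, 0), (0, 1)})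

/-- Normalized area `V_n = 2 vol(T_n)`. -/
def V (n : ℕ) (ω : Fin n → ℝ × ℝ) : ℝ := 2 * (volume (Tchain n ω)).toReal

/-- Number of vertices of `T_n` other than the two corners. -/
def N (n : ℕ) (ω : Fin n → ℝ × ℝ) : ℕ :=
  (Set.extremePoints ℝ (Tchain n ω)).ncard - 2

/-- Normalized moments `q_{n,k} = C(n+k,k) E[V_n^k]`. -/
def q (n k : ℕ) : ℝ := ((n + k).choose k : ℝ) * ∫ ω, (V n ω) ^ k ∂ P n

/-- Probability generating function of `N_n`. -/
def G (n : ℕ) (t : ℝ) : ℝ := ∫ ω, t ^ (N n ω) ∂ P n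

/-- Harmonic number. -/
def H (j : ℕ) : ℝ := ∑ i ∈ Finset.range j, 1 / ((i : ℝ) + 1)

/-- Generalized harmonic number of order 2. -/
def H2 (j : ℕ) : ℝ := ∑ i ∈ Finset.range j, 1 / ((i : ℝ) + 1) ^ 2

/-- `c(k,ℓ)`: elementary symmetric polynomial `e_k` of `2/(j(j+1))`, `j = 1,…,ℓ`. -/
def c (k l : ℕ) : ℝ :=
  ∑ S ∈ (Finset.Icc 1 l).powersetCard k, ∏ j ∈ S, 2 / ((j : ℝ) * ((j : ℝ) + 1))

/-!
Condition on the sample point `z` which is seen from `(1, 0)` at the least height. Given `z`, every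
other point is uniform above the line through `(1, 0)` and `z`, a region which `z` and `(0, 1)` cut
into two triangles. Points in the lower one, spanned by `z` and the corners, are absorbed by the
hull; those in the upper one form an affine copy of a uniform sample of `T`, so `V n` splits as
`lowerArea z + upperArea z * V m` with `m` binomial. As the moments of the pair
`(upperArea z, lowerArea z)` are Beta integrals, `(n + k) (n + k + 1) q n k` becomes a sum over
`l ≤ k` of convolutions of `q · l` with the coefficients of powers of `1 / (1 - x)`. Its second
difference in `n` is therefore a recursion in which, for `k ≤ 2`, only explicit sums remain.
-/

section Samples

variable {E : Type*} [MeasurableSpace E]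

/-- Integral of a set function `g` over the random set of `n` independent points with law `μ`. -/
def sampleLIntegral (μ : Measure E) (n : ℕ) (g : Set E → ENNReal) : ENNReal :=
  ∫⁻ ω, g (Set.range ω) ∂Measure.pi fun _ : Fin n => μ

/-- Set functions which are measurable functions of the points of a finite sample. -/
def SampleMeasurable (g : Set E → ENNReal) : Prop :=
  ∀ n, Measurable fun ω : Fin n → E => g (Set.range ω)

theorem measurable_insertNth {n : ℕ} (i : Fin (n + 1)) :
    Measurable fun p : E × (Fin n → E) => (i.insertNth p.1 p.2 : Fin (n + 1) → E) :=
  (MeasurableEquiv.piFinSuccAbove (fun _ => E) i).symm.measurable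

theorem lintegral_pi_insertNth (μ : Measure E) [SigmaFinite μ] {n : ℕ} (i : Fin (n + 1))
    {F : (Fin (n + 1) → E) → ENNReal} (hF : Measurable F) :
    ∫⁻ ω, F ω ∂(Measure.pi fun _ => μ) =
      ∫⁻ x, ∫⁻ ω, F (i.insertNth x ω) ∂(Measure.pi fun _ => μ) ∂μ := by
  have hmp := (measurePreserving_piFinSuccAbove (fun _ : Fin (n + 1) => μ) i).symm
  rw [← hmp.lintegral_comp hF]
  exact lintegral_prod _ (hF.comp hmp.measurable).aemeasurable

-- `Fin.range_insertNth` spells the right-hand side with `Set.insert`, which blocks rewriting.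
omit [MeasurableSpace E] in
theorem range_insertNth_eq_insert {n : ℕ} (i : Fin (n + 1)) (x : E) (ω : Fin n → E) :
    Set.range (i.insertNth x ω : Fin (n + 1) → E) = insert x (Set.range ω) :=
  Fin.range_insertNth i x ω

namespace SampleMeasurable

variable {g : Set E → ENNReal}

theorem measurable_insert (hg : SampleMeasurable g) (n : ℕ) :
    Measurable fun p : E × (Fin n → E) => g (insert p.1 (Set.range p.2)) := by
  simpa only [Function.comp_def, range_insertNth_eq_insert] using
    (hg (n + 1)).comp (measurable_insertNth 0)

theorem comp_insert (hg : SampleMeasurable g) (x : E) : SampleMeasurable fun s => g (insert x s) :=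
  fun n => (hg.measurable_insert n).comp measurable_prodMk_left

theorem comp_image (hg : SampleMeasurable g) {S : E → E} (hS : Measurable S) :
    SampleMeasurable fun s => g (S '' s) := fun n => by
  simpa only [Function.comp_def, ← Set.range_comp] using
    (hg n).comp (measurable_pi_lambda _ fun i => hS.comp (measurable_pi_apply i))

theorem measurable_sampleLIntegral_insert (hg : SampleMeasurable g) (μ : Measure E)
    [SigmaFinite μ] (n : ℕ) :
    Measurable fun x => sampleLIntegral μ n fun s => g (insert x s) :=
  (hg.measurable_insert n).lintegral_prod_right'

end SampleMeasurable

variable {g : Set E → ENNReal}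

@[simp]
theorem sampleLIntegral_zero (μ : Measure E) : sampleLIntegral μ 0 g = g ∅ := by
  simp [sampleLIntegral, lintegral_unique]

theorem sampleLIntegral_succ (hg : SampleMeasurable g) (μ : Measure E) [SigmaFinite μ] (n : ℕ) :
    sampleLIntegral μ (n + 1) g = ∫⁻ x, sampleLIntegral μ n (fun s => g (insert x s)) ∂μ := by
  simp only [sampleLIntegral, lintegral_pi_insertNth μ 0 (hg (n + 1)), range_insertNth_eq_insert]

theorem sampleLIntegral_smul_map (hg : SampleMeasurable g) (κ : Measure E) [IsFiniteMeasure κ]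
    {S : E → E} (hS : Measurable S) {c : ENNReal} (hc : c ≠ ⊤) (n : ℕ) :
    sampleLIntegral (c • κ.map S) n g = c ^ n * sampleLIntegral κ n (fun s => g (S '' s)) := by
  have : IsFiniteMeasure (c • κ.map S) := Measure.smul_finite _ hc
  induction n generalizing g with
  | zero => simp
  | succ n ih =>
    have hmeas := (hg.comp_image hS).measurable_sampleLIntegral_insert κ n
    rw [sampleLIntegral_succ hg, sampleLIntegral_succ (hg.comp_image hS), lintegral_smul_measure,
      lintegral_map (hg.measurable_sampleLIntegral_insert _ n) hS]
    simp_rw [ih (hg.comp_insert _), ← Set.image_insert_eq]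
    rw [lintegral_const_mul _ hmeas, smul_eq_mul, pow_succ', mul_assoc]

theorem sampleLIntegral_add_of_absorbed (hg : SampleMeasurable g) (ν₁ ν₂ : Measure E)
    [IsFiniteMeasure ν₁] [IsFiniteMeasure ν₂] (habs : ∀ᵐ x ∂ν₂, ∀ s, g (insert x s) = g s)
    (n : ℕ) :
    sampleLIntegral (ν₁ + ν₂) n g = ∑ m ∈ Finset.range (n + 1),
      (n.choose m : ENNReal) * (ν₂ Set.univ ^ (n - m) * sampleLIntegral ν₁ m g) := by
  induction n generalizing g with
  | zero => simp
  | succ n ih =>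
    have hν₁ : ∫⁻ x, sampleLIntegral (ν₁ + ν₂) n (fun s => g (insert x s)) ∂ν₁ =
        ∑ m ∈ Finset.range (n + 1), (n.choose m : ENNReal) *
          (ν₂ Set.univ ^ (n - m) * sampleLIntegral ν₁ (m + 1) g) := by
      have habs' (x : E) : ∀ᵐ y ∂ν₂, ∀ s, g (insert x (insert y s)) = g (insert x s) := by
        filter_upwards [habs] with y hy s
        rw [Set.insert_comm, hy]
      have hmeas := hg.measurable_sampleLIntegral_insert ν₁
      simp_rw [fun x => ih (hg.comp_insert x) (habs' x)]
      rw [lintegral_finsetSum _ fun m _ => ((hmeas m).const_mul _).const_mul _]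
      simp_rw [sampleLIntegral_succ hg, ← lintegral_const_mul _ (hmeas _),
        ← lintegral_const_mul _ ((hmeas _).const_mul _)]
    have hν₂ : ∫⁻ x, sampleLIntegral (ν₁ + ν₂) n (fun s => g (insert x s)) ∂ν₂ =
        ν₂ Set.univ * sampleLIntegral (ν₁ + ν₂) n g := by
      rw [mul_comm, ← lintegral_const]
      refine lintegral_congr_ae ?_
      filter_upwards [habs] with x hx
      simp_rw [hx]
    rw [sampleLIntegral_succ hg, lintegral_add_measure, hν₁, hν₂, ih hg habs,
      Finset.sum_choose_succ_mul (fun i j => ν₂ Set.univ ^ j * sampleLIntegral ν₁ i g) n, add_comm]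
    congr 1
    rw [Finset.mul_sum]
    refine Finset.sum_congr rfl fun m hm => ?_
    rw [Nat.succ_sub (Finset.mem_range_succ_iff.1 hm), pow_succ]
    ring

theorem ae_range_subset {μ : Measure E} [SigmaFinite μ] {A : Set E} (hA : ∀ᵐ x ∂μ, x ∈ A)
    (n : ℕ) : ∀ᵐ ω ∂(Measure.pi fun _ : Fin n => μ), Set.range ω ⊆ A := by
  simp only [Set.range_subset_iff]
  exact ae_all_iff.2 fun i => (Measure.quasiMeasurePreserving_eval (fun _ : Fin n => μ) i).ae hA

theorem sampleLIntegral_congr_of_ae_mem {μ : Measure E} [SigmaFinite μ] {A : Set E}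
    (hA : ∀ᵐ x ∂μ, x ∈ A) (n : ℕ) {g₁ g₂ : Set E → ENNReal} (h : ∀ s ⊆ A, g₁ s = g₂ s) :
    sampleLIntegral μ n g₁ = sampleLIntegral μ n g₂ :=
  lintegral_congr_ae ((ae_range_subset hA n).mono fun _ hω => h _ hω)

theorem sampleLIntegral_sum_mul (μ : Measure E) (n : ℕ) {ι : Type*} (I : Finset ι)
    (c : ι → ENNReal) {g : ι → Set E → ENNReal} (hg : ∀ i ∈ I, SampleMeasurable (g i)) :
    sampleLIntegral μ n (fun s => ∑ i ∈ I, c i * g i s) =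
      ∑ i ∈ I, c i * sampleLIntegral μ n (g i) := by
  rw [sampleLIntegral, lintegral_finsetSum' I fun i hi => ((hg i hi n).const_mul _).aemeasurable]
  exact Finset.sum_congr rfl fun i hi => lintegral_const_mul _ (hg i hi n)

theorem ae_injective_comp (μ : Measure E) [SigmaFinite μ] {f : E → ℝ} (hf : Measurable f)
    (hatom : ∀ r, μ {x | f x = r} = 0) (n : ℕ) :
    ∀ᵐ ω ∂(Measure.pi fun _ : Fin n => μ), Function.Injective (f ∘ ω) := by
  suffices hne : ∀ i j : Fin n, i ≠ j →
      ∀ᵐ ω ∂(Measure.pi fun _ : Fin n => μ), f (ω i) ≠ f (ω j) by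
    have hall := ae_all_iff.2 fun i => ae_all_iff.2 fun j => ae_all_iff.2 (hne i j)
    filter_upwards [hall] with ω hω i j hij
    exact by_contra fun h => hω i j h hij
  rcases n with _ | n
  · exact fun i => i.elim0
  rintro i j hij
  obtain ⟨k, rfl⟩ := Fin.exists_succAbove_eq hij.symm
  have hpair : ∀ᵐ p : E × (Fin n → E) ∂μ.prod (Measure.pi fun _ => μ), f p.1 ≠ f (p.2 k) := by
    have hmeas : MeasurableSet {p : E × (Fin n → E) | f p.1 ≠ f (p.2 k)} :=
      (measurableSet_eq_fun (by fun_prop) (by fun_prop)).compl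
    refine (Measure.ae_prod_iff_ae_ae hmeas).2 (.of_forall fun x => ?_)
    have hx : ∀ᵐ y ∂μ, f x ≠ f y := by simpa [ae_iff, eq_comm] using hatom (f x)
    exact (Measure.quasiMeasurePreserving_eval (fun _ : Fin n => μ) k).ae hx
  exact (measurePreserving_piFinSuccAbove (fun _ => μ) i).quasiMeasurePreserving.ae hpair

theorem sampleLIntegral_succ_eq_argmin (hg : SampleMeasurable g) (μ : Measure E)
    [IsFiniteMeasure μ] {f : E → ℝ} (hf : Measurable f) (hatom : ∀ r, μ {x | f x = r} = 0)
    (n : ℕ) :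
    sampleLIntegral μ (n + 1) g = (n + 1) *
      ∫⁻ x, sampleLIntegral (μ.restrict {y | f x ≤ f y}) n (fun s => g (insert x s)) ∂μ := by
  let argmin (i : Fin (n + 1)) : Set (Fin (n + 1) → E) := {ω | ∀ j, f (ω i) ≤ f (ω j)}
  have hargmin (i) : MeasurableSet (argmin i) := by
    simp only [argmin, Set.ofPred_forall]
    exact .iInter fun j => measurableSet_le (by fun_prop) (by fun_prop)
  have hsum : ∀ᵐ ω ∂(Measure.pi fun _ : Fin (n + 1) => μ),
      g (Set.range ω) = ∑ i, (argmin i).indicator (fun ω => g (Set.range ω)) ω := by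
    filter_upwards [ae_injective_comp μ hf hatom (n + 1)] with ω hω
    obtain ⟨i, hi⟩ := Finite.exists_min (f ∘ ω)
    rw [Finset.sum_eq_single i, Set.indicator_of_mem (by exact hi)]
    · intro j _ hji
      exact Set.indicator_of_notMem (fun hj => hji (hω ((hj i).antisymm (hi j)))) _
    · simp
  have hterm (i : Fin (n + 1)) :
      ∫⁻ ω, (argmin i).indicator (fun ω => g (Set.range ω)) ω ∂(Measure.pi fun _ => μ) =
        ∫⁻ x, sampleLIntegral (μ.restrict {y | f x ≤ f y}) n (fun s => g (insert x s)) ∂μ := by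
    rw [lintegral_pi_insertNth μ i ((hg _).indicator (hargmin i))]
    refine lintegral_congr fun x => ?_
    have hA : MeasurableSet {y | f x ≤ f y} := measurableSet_le measurable_const hf
    rw [sampleLIntegral, ← Measure.restrict_pi_pi, ← lintegral_indicator (.univ_pi fun _ => hA)]
    refine lintegral_congr fun ω => ?_
    simp only [Set.indicator, argmin, Set.mem_ofPred_eq, Set.mem_univ_pi, i.forall_iff_succAbove,
      Fin.insertNth_apply_same, Fin.insertNth_apply_succAbove, le_refl, true_and,
      range_insertNth_eq_insert]
  rw [sampleLIntegral, lintegral_congr_ae hsum,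
    lintegral_finsetSum _ fun i _ => (hg _).indicator (hargmin i)]
  simp [hterm]

end Samples

section Hulls

variable {E ι : Type*} [AddCommGroup E] [Module ℝ E]

theorem convexHull_range_eq_image_stdSimplex [Fintype ι] (v : ι → E) :
    convexHull ℝ (Set.range v) = (fun w : ι → ℝ => ∑ i, w i • v i) '' stdSimplex ℝ ι := by
  classical
  have hv : Set.range v = Fintype.linearCombination ℝ v ''
      Set.range fun i => (Pi.single i 1 : ι → ℝ) := by
    simp [← Set.range_comp, Function.comp_def]
  rw [hv, ← LinearMap.image_convexHull, convexHull_rangle_single_eq_stdSimplex]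
  rfl

theorem measurable_measure_convexHull_range [TopologicalSpace E] [ContinuousAdd E]
    [ContinuousSMul ℝ E] [T2Space E] [SecondCountableTopology E] [MeasurableSpace E]
    [BorelSpace E] (ν : Measure E) [SFinite ν] [Finite ι] :
    Measurable fun v : ι → E => ν (convexHull ℝ (Set.range v)) := by
  have := Fintype.ofFinite ι
  have : CompactSpace (stdSimplex ℝ ι) :=
    isCompact_iff_compactSpace.1 (isCompact_stdSimplex ℝ ι)
  -- The graph of `v ↦ convexHull ℝ (range v)` is closed, being the projection along the compact
  -- simplex of the closed set of all `(v, z, w)` with `z = ∑ i, w i • v i`.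
  have hgraph : IsClosed {p : (ι → E) × E | p.2 ∈ convexHull ℝ (Set.range p.1)} := by
    have hclosed : IsClosed {p : ((ι → E) × E) × stdSimplex ℝ ι |
        ∑ i, p.2.1 i • p.1.1 i = p.1.2} := by
      refine isClosed_eq (continuous_finsetSum _ fun i _ => ?_) (by fun_prop)
      exact ((continuous_apply i).comp (continuous_subtype_val.comp continuous_snd)).smul
        ((continuous_apply i).comp (continuous_fst.comp continuous_fst))
    convert isClosedMap_fst_of_compactSpace _ hclosed
    ext p
    simp [convexHull_range_eq_image_stdSimplex, and_comm]
  exact measurable_measure_prodMk_left hgraph.measurableSet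

theorem convexHull_insert_convexHull (x : E) (s : Set E) :
    convexHull ℝ (insert x (convexHull ℝ s)) = convexHull ℝ (insert x s) := by
  rw [Set.insert_eq, Set.insert_eq, convexHull_convexHull_union_right]

theorem convexHull_insert_of_mem_convexHull {x : E} {s : Set E} (hx : x ∈ convexHull ℝ s) :
    convexHull ℝ (insert x s) = convexHull ℝ s := by
  rw [← convexHull_insert_convexHull, Set.insert_eq_of_mem hx,
    (convex_convexHull ℝ s).convexHull_eq]

theorem segment_subset_union_segment {a b m : E} (hm : m ∈ segment ℝ a b) :
    segment ℝ a b ⊆ segment ℝ a m ∪ segment ℝ m b := by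
  rw [segment_eq_image_lineMap] at hm
  obtain ⟨r, hr, rfl⟩ := hm
  have himage (s t : ℝ) : segment ℝ (AffineMap.lineMap a b s) (AffineMap.lineMap a b t) =
      AffineMap.lineMap a b '' segment ℝ s t := (image_segment ℝ _ s t).symm
  have hleft := himage 0 r
  have hright := himage r 1
  rw [AffineMap.lineMap_apply_zero, segment_eq_Icc hr.1] at hleft
  rw [AffineMap.lineMap_apply_one, segment_eq_Icc hr.2] at hright
  rw [hleft, hright, ← Set.image_union, Set.Icc_union_Icc_eq_Icc hr.1 hr.2,
    segment_eq_image_lineMap]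

theorem convexHull_insert_eq_union_triangle {K : Set E} (hK : Convex ℝ K) {a b c z : E}
    (hab : z ∈ segment ℝ a b) (hz : z ∈ K) (hc : c ∈ K) (hsub : K ⊆ convexHull ℝ {a, z, c}) :
    convexHull ℝ (insert b K) = K ∪ convexHull ℝ {z, b, c} := by
  refine Set.Subset.antisymm ?_ (Set.union_subset ?_ ?_)
  · rw [convexHull_insert ⟨z, hz⟩, hK.convexHull_eq]
    intro x hx
    simp only [mem_convexJoin, Set.mem_singleton_iff, exists_eq_left] at hx
    obtain ⟨k, hk, hx⟩ := hx
    obtain ⟨r, hr, hkr⟩ : ∃ r ∈ segment ℝ z c, k ∈ segment ℝ a r := by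
      simpa [← convexJoin_singleton_segment, mem_convexJoin] using hsub hk
    -- The segment from `b` to `k` crosses `[z, c]`, at a point `m`.
    obtain ⟨m, hm, hmzr⟩ := Set.not_disjoint_iff.1 (not_disjoint_segment_convexHull_triple
      hab hkr (left_mem_segment ℝ b z))
    have hmzc : m ∈ segment ℝ z c := by
      refine convexHull_min ?_ (convex_segment z c) hmzr
      simp [Set.insert_subset_iff, hr, left_mem_segment]
    rw [segment_symm] at hm
    rcases segment_subset_union_segment hm hx with hxm | hxm
    · right
      have hzc : segment ℝ z c ⊆ convexHull ℝ {z, b, c} :=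
        segment_subset_convexHull (by simp) (by simp)
      exact (convex_convexHull ℝ _).segment_subset (subset_convexHull ℝ _ (by simp))
        (hzc hmzc) hxm
    · exact .inl (hK.segment_subset (hK.segment_subset hz hc hmzc) hk hxm)
  · exact (Set.subset_insert b K).trans (subset_convexHull ℝ _)
  · refine convexHull_mono ?_
    simp [Set.insert_subset_iff, hz, hc]

end Hulls

section AffineHaar

variable {E : Type*} [NormedAddCommGroup E] [NormedSpace ℝ E] [FiniteDimensional ℝ E]
  [MeasurableSpace E] [BorelSpace E] (μ : Measure E) [μ.IsAddHaarMeasure]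

omit [FiniteDimensional ℝ E] [MeasurableSpace E] [BorelSpace E] in
theorem affineMap_eq_comp (f : E →ᵃ[ℝ] E) : ⇑f = (· + f 0) ∘ f.linear := by
  ext x
  exact congrFun f.decomp x

theorem addHaar_image_affineMap (f : E →ᵃ[ℝ] E) (s : Set E) :
    μ (f '' s) = ENNReal.ofReal |LinearMap.det f.linear| * μ s := by
  rw [affineMap_eq_comp, Set.image_comp, Set.image_add_right, measure_preimage_add_right,
    Measure.addHaar_image_linearMap]

theorem smul_map_affineMap_addHaar {f : E →ᵃ[ℝ] E} (hf : LinearMap.det f.linear ≠ 0) :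
    ENNReal.ofReal |LinearMap.det f.linear| • μ.map f = μ := by
  rw [affineMap_eq_comp, ← Measure.map_map (by fun_prop)
      f.linear.continuous_of_finiteDimensional.measurable,
    Measure.map_linearMap_addHaar_eq_smul_addHaar μ hf, Measure.map_smul, map_add_right_eq_self,
    smul_smul, ← ENNReal.ofReal_mul (abs_nonneg _), ← abs_mul, mul_inv_cancel₀ hf]
  simp

omit [MeasurableSpace E] [BorelSpace E] in
theorem injective_of_det_linear_ne_zero {f : E →ᵃ[ℝ] E} (hf : LinearMap.det f.linear ≠ 0) :
    Function.Injective f :=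
  f.linear_injective_iff.1 (LinearMap.equivOfDetNeZero _ hf).injective

theorem restrict_image_affineMap_addHaar {f : E →ᵃ[ℝ] E} (hf : LinearMap.det f.linear ≠ 0)
    {s : Set E} (hs : MeasurableSet (f '' s)) :
    μ.restrict (f '' s) = ENNReal.ofReal |LinearMap.det f.linear| • (μ.restrict s).map f := by
  conv_lhs => rw [← smul_map_affineMap_addHaar μ hf]
  rw [Measure.restrict_smul, Measure.restrict_map f.continuous_of_finiteDimensional.measurable hs,
    Set.preimage_image_eq _ (injective_of_det_linear_ne_zero hf)]

end AffineHaar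

section Plane

/-- Twice the signed area of the triangle with vertices `a`, `b`, `c`. -/
def orient (a b c : ℝ × ℝ) : ℝ := (b.1 - a.1) * (c.2 - a.2) - (b.2 - a.2) * (c.1 - a.1)

theorem mem_convexHull_triple {a b c w : ℝ × ℝ} (h : 0 < orient a b c) :
    w ∈ convexHull ℝ {a, b, c} ↔ 0 ≤ orient b c w ∧ 0 ≤ orient c a w ∧ 0 ≤ orient a b w := by
  have hrange : ({a, b, c} : Set (ℝ × ℝ)) = Set.range ![a, b, c] := by
    simp only [Matrix.range_cons, Matrix.range_empty, Set.union_empty, Set.singleton_union]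
  rw [hrange, convexHull_range_eq_image_stdSimplex]
  constructor
  · rintro ⟨l, ⟨hl, hsum⟩, rfl⟩
    have h0 : l 0 = 1 - l 1 - l 2 := by rw [← hsum, Fin.sum_univ_three]; ring
    have hbc : orient b c (∑ i, l i • ![a, b, c] i) = l 0 * orient a b c := by
      simp [Fin.sum_univ_three, orient, h0]; ring
    have hca : orient c a (∑ i, l i • ![a, b, c] i) = l 1 * orient a b c := by
      simp [Fin.sum_univ_three, orient, h0]; ring
    have hab : orient a b (∑ i, l i • ![a, b, c] i) = l 2 * orient a b c := by
      simp [Fin.sum_univ_three, orient, h0]; ring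
    exact ⟨hbc ▸ mul_nonneg (hl 0) h.le, hca ▸ mul_nonneg (hl 1) h.le,
      hab ▸ mul_nonneg (hl 2) h.le⟩
  · rintro ⟨hbc, hca, hab⟩
    refine ⟨![orient b c w / orient a b c, orient c a w / orient a b c,
      orient a b w / orient a b c], ⟨fun i => ?_, ?_⟩, ?_⟩
    · fin_cases i <;> exact div_nonneg ‹_› h.le
    · simp only [Fin.sum_univ_three, Matrix.cons_val]
      field_simp
      simp only [orient]
      ring
    · ext <;> simp [Fin.sum_univ_three] <;> field_simp <;> simp only [orient] <;> ring

theorem mem_T {w : ℝ × ℝ} : w ∈ T ↔ 0 ≤ w.1 ∧ 0 ≤ w.2 ∧ w.1 + w.2 ≤ 1 := by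
  rw [T, mem_convexHull_triple (by norm_num [orient])]
  simp only [orient]
  grind

/-- The affine map of the plane sending `(0, 0)`, `(1, 0)`, `(0, 1)` to `a`, `b`, `c`. -/
def triangleMap (a b c : ℝ × ℝ) : ℝ × ℝ →ᵃ[ℝ] ℝ × ℝ :=
  (Matrix.toLin (.finTwoProd ℝ) (.finTwoProd ℝ)
    !![b.1 - a.1, c.1 - a.1; b.2 - a.2, c.2 - a.2]).toAffineMap + AffineMap.const ℝ _ a

variable (a b c : ℝ × ℝ)

theorem triangleMap_apply (w : ℝ × ℝ) :
    triangleMap a b c w = a + w.1 • (b - a) + w.2 • (c - a) := by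
  ext <;> simp [triangleMap, Matrix.toLin_finTwoProd_apply] <;> ring

theorem image_triangleMap_T : triangleMap a b c '' T = convexHull ℝ {a, b, c} := by
  rw [T, AffineMap.image_convexHull]
  simp [Set.image_insert_eq, triangleMap_apply]

theorem det_triangleMap_linear : LinearMap.det (triangleMap a b c).linear = orient a b c := by
  simp [triangleMap, LinearMap.det_toLin, Matrix.det_fin_two_of, orient, mul_comm]

theorem isCompact_convexHull_triple : IsCompact (convexHull ℝ {a, b, c}) :=
  (Set.toFinite _).isCompact_convexHull ℝ

theorem measurableSet_convexHull_triple : MeasurableSet (convexHull ℝ {a, b, c}) :=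
  (isCompact_convexHull_triple a b c).measurableSet

theorem volume_convexHull_triple :
    volume (convexHull ℝ {a, b, c}) = ENNReal.ofReal |orient a b c| * volume T := by
  rw [← image_triangleMap_T, addHaar_image_affineMap, det_triangleMap_linear]

variable {a b c}

theorem restrict_convexHull_triple (h : 0 < orient a b c) :
    (2 : ENNReal) • volume.restrict (convexHull ℝ {a, b, c}) =
      ENNReal.ofReal (orient a b c) • μT.map (triangleMap a b c) := by
  rw [← image_triangleMap_T, restrict_image_affineMap_addHaar, det_triangleMap_linear, abs_of_pos h,
    μT, Measure.map_smul, smul_comm]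
  · rw [det_triangleMap_linear]
    exact h.ne'
  · rw [image_triangleMap_T]
    exact measurableSet_convexHull_triple a b c

theorem convexHull_triple_eq_union {z : ℝ × ℝ} (hz : z ∈ segment ℝ a b) :
    convexHull ℝ {a, b, c} = convexHull ℝ {a, z, c} ∪ convexHull ℝ {z, b, c} := by
  rw [← convexHull_insert_eq_union_triangle (convex_convexHull ℝ {a, z, c}) hz
    (subset_convexHull ℝ _ (by simp)) (subset_convexHull ℝ _ (by simp)) subset_rfl]
  have hzabc : z ∈ convexHull ℝ {a, b, c} := segment_subset_convexHull (by simp) (by simp) hz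
  rw [convexHull_insert_convexHull, Set.insert_comm a z, Set.insert_comm b z, Set.insert_comm b a,
    convexHull_insert_of_mem_convexHull hzabc]

theorem aedisjoint_convexHull_triple {z : ℝ × ℝ} (hz : z ∈ segment ℝ a b) :
    AEDisjoint volume (convexHull ℝ {a, z, c}) (convexHull ℝ {z, b, c}) := by
  have hadd : |orient a b c| = |orient a z c| + |orient z b c| := by
    obtain ⟨s, t, hs, ht, hst, rfl⟩ := hz
    obtain rfl : s = 1 - t := by linarith
    have haz : orient a ((1 - t) • a + t • b) c = t * orient a b c := by
      simp [orient]; ring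
    have hzb : orient ((1 - t) • a + t • b) b c = (1 - t) * orient a b c := by
      simp [orient]; ring
    rw [haz, hzb, abs_mul, abs_mul, abs_of_nonneg hs, abs_of_nonneg ht]
    ring
  have hvol := measure_union_add_inter (μ := volume) (convexHull ℝ {a, z, c})
    (measurableSet_convexHull_triple z b c)
  rw [← convexHull_triple_eq_union hz, volume_convexHull_triple a b c,
    volume_convexHull_triple a z c, volume_convexHull_triple z b c, hadd,
    ENNReal.ofReal_add (abs_nonneg _) (abs_nonneg _), add_mul] at hvol
  have hfin : volume (convexHull ℝ {a, b, c}) ≠ ⊤ :=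
    (isCompact_convexHull_triple a b c).measure_lt_top.ne
  rw [volume_convexHull_triple a b c, hadd, ENNReal.ofReal_add (abs_nonneg _) (abs_nonneg _),
    add_mul] at hfin
  exact (ENNReal.add_right_inj hfin).1 (hvol.trans (add_zero _).symm)

end Plane

section Integrals

theorem integral_pow_mul_one_sub_pow (i j : ℕ) :
    ∫ x in (0 : ℝ)..1, x ^ i * (1 - x) ^ j = i.factorial * j.factorial / (i + j + 1).factorial := by
  induction j generalizing i with
  | zero =>
    simp only [pow_zero, mul_one, integral_pow, Nat.factorial_zero, add_zero, Nat.factorial_succ]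
    push_cast
    field_simp
    simp
  | succ j ih =>
    have hderiv (x : ℝ) : HasDerivAt (fun x : ℝ => x ^ (i + 1) * (1 - x) ^ (j + 1))
        ((i + 1) * (x ^ i * (1 - x) ^ (j + 1)) - (j + 1) * (x ^ (i + 1) * (1 - x) ^ j)) x := by
      refine ((hasDerivAt_pow (i + 1) x).mul
        (((hasDerivAt_id x).const_sub 1).pow (j + 1))).congr_deriv ?_
      simp
      ring
    have hint {f : ℝ → ℝ} (hf : Continuous f) : IntervalIntegrable f volume 0 1 :=
      hf.intervalIntegrable _ _
    have hparts := intervalIntegral.integral_eq_sub_of_hasDerivAt (fun x _ => hderiv x)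
      (hint (by fun_prop))
    rw [intervalIntegral.integral_sub (hint (by fun_prop)) (hint (by fun_prop)),
      intervalIntegral.integral_const_mul, intervalIntegral.integral_const_mul, ih (i + 1),
      show i + 1 + j + 1 = i + (j + 1) + 1 by ring, sub_self (1 : ℝ), zero_pow j.succ_ne_zero,
      zero_pow i.succ_ne_zero, mul_zero, zero_mul, sub_self, sub_eq_zero] at hparts
    simp only [Nat.factorial_succ i, Nat.factorial_succ j] at hparts ⊢
    push_cast at hparts ⊢
    field_simp at hparts ⊢
    exact hparts

theorem measurableSet_T : MeasurableSet T := measurableSet_convexHull_triple _ _ _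

theorem lintegral_T {f : ℝ × ℝ → ENNReal} (hf : Measurable f) :
    ∫⁻ z in T, f z = ∫⁻ x in Set.Icc (0 : ℝ) 1, ∫⁻ y in Set.Icc (0 : ℝ) (1 - x), f (x, y) := by
  rw [← lintegral_indicator measurableSet_T, Measure.volume_eq_prod,
    lintegral_prod _ (hf.indicator measurableSet_T).aemeasurable,
    ← lintegral_indicator measurableSet_Icc]
  refine lintegral_congr fun x => ?_
  by_cases hx : x ∈ Set.Icc (0 : ℝ) 1
  · rw [Set.indicator_of_mem hx, ← lintegral_indicator measurableSet_Icc]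
    have hmem (y : ℝ) : (x, y) ∈ T ↔ y ∈ Set.Icc (0 : ℝ) (1 - x) := by
      rw [mem_T, Set.mem_Icc, le_sub_iff_add_le']
      exact and_iff_right hx.1
    simp only [Set.indicator, hmem]
  · rw [Set.indicator_of_notMem hx]
    have hnot (y : ℝ) : (x, y) ∉ T := fun h => by
      obtain ⟨hx0, hy0, hxy⟩ := mem_T.1 h
      exact hx ⟨hx0, by linarith⟩
    simp [hnot]

/-- The second coordinate of the point where the line through `(1, 0)` and `z` meets the axis
`{0} × ℝ`; it orders the points of `T` by the slope at which they are seen from `(1, 0)`. -/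
def axisHeight (z : ℝ × ℝ) : ℝ := z.2 / (1 - z.1)

/-- Normalized area of the triangle with vertices `(0, axisHeight z)`, `z` and `(0, 1)`. -/
def upperArea (z : ℝ × ℝ) : ℝ := z.1 * (1 - axisHeight z)

/-- Normalized area of the triangle with vertices `z`, `(1, 0)` and `(0, 1)`. -/
def lowerArea (z : ℝ × ℝ) : ℝ := 1 - z.1 - z.2

/-- The integral of `upperArea ^ i * lowerArea ^ j` over the uniform distribution on `T`. -/
def areaMoment (i j : ℕ) : ℝ :=
  2 * (i.factorial * (j + 1).factorial / (i + j + 2).factorial / (i + j + 1))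

@[fun_prop]
theorem measurable_axisHeight : Measurable axisHeight := by
  unfold axisHeight
  fun_prop

@[fun_prop]
theorem measurable_upperArea : Measurable upperArea := by
  unfold upperArea
  fun_prop

@[fun_prop]
theorem measurable_lowerArea : Measurable lowerArea := by
  unfold lowerArea
  fun_prop

theorem areaMoment_nonneg (i j : ℕ) : 0 ≤ areaMoment i j := by
  unfold areaMoment
  positivity

theorem upperArea_pow_mul_lowerArea_pow {x y : ℝ} (hx : x < 1) (i j : ℕ) :
    upperArea (x, y) ^ i * lowerArea (x, y) ^ j =
      (x / (1 - x)) ^ i * (1 - x - y) ^ (i + j) := by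
  have hx' : 1 - x ≠ 0 := by linarith
  have hupper : upperArea (x, y) = x / (1 - x) * (1 - x - y) := by
    simp only [upperArea, axisHeight]
    field_simp
  rw [hupper, lowerArea, mul_pow, pow_add, mul_assoc]

theorem lintegral_fiber_areas {x : ℝ} (hx : x ∈ Set.Icc (0 : ℝ) 1) (i j : ℕ) :
    ∫⁻ y in Set.Icc (0 : ℝ) (1 - x),
        ENNReal.ofReal (upperArea (x, y) ^ i * lowerArea (x, y) ^ j) =
      ENNReal.ofReal (x ^ i * (1 - x) ^ (j + 1) / (i + j + 1)) := by
  rcases hx.2.eq_or_lt with rfl | hx1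
  · simp
  have hx1' : 0 < 1 - x := by linarith
  simp_rw [upperArea_pow_mul_lowerArea_pow hx1]
  rw [← ofReal_integral_eq_lintegral_ofReal]
  · rw [integral_Icc_eq_integral_Ioc, ← intervalIntegral.integral_of_le hx1'.le,
      intervalIntegral.integral_const_mul,
      intervalIntegral.integral_comp_sub_left (fun y => y ^ (i + j)) (1 - x), integral_pow]
    congr 1
    simp only [sub_self, sub_zero, Nat.cast_add]
    rw [zero_pow (by lia), div_pow]
    field_simp
    ring
  · exact (by fun_prop : Continuous _).continuousOn.integrableOn_Icc
  · filter_upwards [ae_restrict_mem measurableSet_Icc] with y hy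
    exact mul_nonneg (pow_nonneg (div_nonneg hx.1 hx1'.le) _) (pow_nonneg (by linarith [hy.2]) _)

theorem lintegral_areas (i j : ℕ) :
    ∫⁻ z, ENNReal.ofReal (upperArea z ^ i * lowerArea z ^ j) ∂μT =
      ENNReal.ofReal (areaMoment i j) := by
  rw [μT, lintegral_smul_measure, lintegral_T (by fun_prop),
    setLIntegral_congr_fun measurableSet_Icc fun x hx => lintegral_fiber_areas hx i j,
    ← ofReal_integral_eq_lintegral_ofReal]
  · rw [integral_Icc_eq_integral_Ioc, ← intervalIntegral.integral_of_le zero_le_one,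
      intervalIntegral.integral_div, integral_pow_mul_one_sub_pow, smul_eq_mul,
      ← ENNReal.ofReal_ofNat, ← ENNReal.ofReal_mul (by norm_num)]
    rfl
  · exact (by fun_prop : Continuous _).continuousOn.integrableOn_Icc
  · filter_upwards [ae_restrict_mem measurableSet_Icc] with x hx
    have hx0 := hx.1
    have hx1 : 0 ≤ 1 - x := by linarith [hx.2]
    positivity

theorem two_mul_volume_T : 2 * volume T = 1 := by
  have hT := lintegral_areas 0 0
  simpa [μT, areaMoment] using hT

instance : IsProbabilityMeasure μT := ⟨by simp [μT, two_mul_volume_T]⟩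

instance (n : ℕ) : IsProbabilityMeasure (P n) := by
  unfold P
  infer_instance

theorem two_mul_volume_convexHull_triple (a b c : ℝ × ℝ) :
    2 * volume (convexHull ℝ {a, b, c}) = ENNReal.ofReal |orient a b c| := by
  rw [volume_convexHull_triple, mul_left_comm, two_mul_volume_T, mul_one]

end Integrals

section Chain

/-- The convex hull of `s` and the corners `(1, 0)`, `(0, 1)`; `Tchain n ω` is the case
`s = Set.range ω`. -/
def chainHull (s : Set (ℝ × ℝ)) : Set (ℝ × ℝ) := convexHull ℝ (s ∪ {(1, 0), (0, 1)})

/-- The normalized area of `chainHull s`, as an extended nonnegative real. -/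
def chainArea (s : Set (ℝ × ℝ)) : ENNReal := 2 * volume (chainHull s)

/-- `z` lies in `T`, but neither on the side `{0} × [0, 1]` nor on the side joining the two corners;
this makes `upperArea z` and `lowerArea z` positive. -/
def IsGeneric (z : ℝ × ℝ) : Prop := 0 < z.1 ∧ 0 ≤ z.2 ∧ z.1 + z.2 < 1

theorem ae_fst_ne (r : ℝ) : ∀ᵐ z : ℝ × ℝ, z.1 ≠ r :=
  Measure.quasiMeasurePreserving_fst.ae (by simp [ae_iff] : ∀ᵐ x : ℝ, x ≠ r)

theorem ae_snd_ne_comp_fst {f : ℝ → ℝ} (hf : Measurable f) : ∀ᵐ z : ℝ × ℝ, z.2 ≠ f z.1 := by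
  rw [Measure.volume_eq_prod, Measure.ae_prod_iff_ae_ae]
  · exact .of_forall fun x => by simp [ae_iff]
  · exact (measurableSet_eq_fun (by fun_prop) (by fun_prop)).compl

theorem ae_μT_of_ae {p : ℝ × ℝ → Prop} (h : ∀ᵐ z, p z) : ∀ᵐ z ∂μT, p z :=
  Measure.ae_smul_measure (ae_restrict_of_ae h) 2

theorem ae_mem_T : ∀ᵐ z ∂μT, z ∈ T :=
  Measure.ae_smul_measure (ae_restrict_mem measurableSet_T) 2

theorem ae_isGeneric : ∀ᵐ z ∂μT, IsGeneric z := by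
  filter_upwards [ae_mem_T, ae_μT_of_ae (ae_fst_ne 0),
    ae_μT_of_ae (ae_snd_ne_comp_fst (f := fun x => 1 - x) (by fun_prop))] with z hz hfst hsnd
  obtain ⟨hx, hy, hxy⟩ := mem_T.1 hz
  exact ⟨hx.lt_of_ne' hfst, hy, hxy.lt_of_ne fun h => hsnd (by linarith)⟩

theorem μT_axisHeight_eq (r : ℝ) : μT {z | axisHeight z = r} = 0 := by
  have hne : ∀ᵐ z ∂μT, axisHeight z ≠ r := by
    filter_upwards [ae_isGeneric,
      ae_μT_of_ae (ae_snd_ne_comp_fst (f := fun x => r * (1 - x)) (by fun_prop))] with z hz hsnd h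
    have hx : 1 - z.1 ≠ 0 := by linarith [hz.1, hz.2.1, hz.2.2]
    exact hsnd ((div_eq_iff hx).1 h)
  simpa [ae_iff] using hne

theorem chainHull_subset_T {s : Set (ℝ × ℝ)} (hs : s ⊆ T) : chainHull s ⊆ T := by
  refine convexHull_min (Set.union_subset hs ?_) (convex_convexHull ℝ _)
  rintro w (rfl | rfl) <;> norm_num [mem_T]

theorem chainArea_le_one {s : Set (ℝ × ℝ)} (hs : s ⊆ T) : chainArea s ≤ 1 := by
  rw [← two_mul_volume_T]
  exact mul_le_mul_right (measure_mono (chainHull_subset_T hs)) 2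

theorem chainArea_empty : chainArea ∅ = 0 := by
  have h := two_mul_volume_convexHull_triple (1, 0) (0, 1) (0, 1)
  simpa [orient, chainArea, chainHull] using h

theorem sampleMeasurable_chainArea : SampleMeasurable chainArea := fun n => by
  have hcorners (ω : Fin n → ℝ × ℝ) :
      Set.range ω ∪ {(1, 0), (0, 1)} = Set.range (Sum.elim ω ![(1, 0), (0, 1)]) := by
    simp [Set.Sum.elim_range, Set.insert_comm]
  simp only [chainArea, chainHull, hcorners]
  refine ((measurable_measure_convexHull_range volume).comp (measurable_pi_lambda _ ?_)).const_mul 2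
  rintro (i | i)
  · exact measurable_pi_apply i
  · exact measurable_const

theorem sampleMeasurable_chainArea_pow (k : ℕ) : SampleMeasurable fun s => chainArea s ^ k :=
  fun n => (sampleMeasurable_chainArea n).pow_const k

theorem chainArea_insert_of_mem {x : ℝ × ℝ} {s : Set (ℝ × ℝ)} (hx : x ∈ chainHull s) :
    chainArea (insert x s) = chainArea s := by
  rw [chainArea, chainHull, Set.insert_union, convexHull_insert_of_mem_convexHull hx]
  rfl

theorem V_eq_toReal_chainArea (n : ℕ) (ω : Fin n → ℝ × ℝ) :
    V n ω = (chainArea (Set.range ω)).toReal := by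
  simp [V, chainArea, ENNReal.toReal_mul, Tchain, chainHull]

theorem orient_upper (z : ℝ × ℝ) : orient (0, axisHeight z) z (0, 1) = upperArea z := by
  simp [orient, upperArea]

theorem orient_lower (z : ℝ × ℝ) : orient z (1, 0) (0, 1) = lowerArea z := by
  simp [orient, lowerArea]
  ring

namespace IsGeneric

variable {z : ℝ × ℝ} (hz : IsGeneric z)
include hz

theorem one_sub_fst_pos : 0 < 1 - z.1 := by
  linarith [hz.2.1, hz.2.2]

theorem axisHeight_lt_one : axisHeight z < 1 := by
  rw [axisHeight, div_lt_one hz.one_sub_fst_pos]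
  linarith [hz.2.2]

theorem axisHeight_nonneg : 0 ≤ axisHeight z := div_nonneg hz.2.1 hz.one_sub_fst_pos.le

theorem upperArea_pos : 0 < upperArea z := mul_pos hz.1 (by linarith [hz.axisHeight_lt_one])

theorem lowerArea_pos : 0 < lowerArea z := by
  rw [lowerArea]
  linarith [hz.2.2]

theorem axisHeight_mul : axisHeight z * (1 - z.1) = z.2 := div_mul_cancel₀ _ hz.one_sub_fst_pos.ne'

theorem mem_segment : z ∈ segment ℝ (0, axisHeight z) (1, 0) := by
  refine ⟨1 - z.1, z.1, hz.one_sub_fst_pos.le, hz.1.le, by ring, Prod.ext (by simp) ?_⟩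
  simpa [mul_comm] using hz.axisHeight_mul

theorem inter_T_ae_eq_convexHull :
    ({w | axisHeight z ≤ axisHeight w} ∩ T : Set (ℝ × ℝ)) =ᵐ[volume]
      convexHull ℝ {(0, axisHeight z), (1, 0), (0, 1)} := by
  have horient : 0 < orient (0, axisHeight z) (1, 0) (0, 1) := by
    simpa [orient] using hz.axisHeight_lt_one
  refine Filter.eventuallyEq_set.2 ?_
  filter_upwards [ae_fst_ne 1] with w hw
  rw [mem_convexHull_triple horient, Set.mem_inter_iff, mem_T, Set.mem_ofPred_eq]
  have hle (hw1 : w.1 < 1) :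
      axisHeight z ≤ axisHeight w ↔ axisHeight z * (1 - w.1) ≤ w.2 :=
    le_div_iff₀ (by linarith)
  have h0 := hz.axisHeight_nonneg
  have h1 := hz.axisHeight_lt_one
  simp only [orient]
  constructor
  · rintro ⟨hzw, hw1, hw2, hw12⟩
    have := (hle (lt_of_le_of_ne (by linarith) hw)).1 hzw
    exact ⟨by linarith, by nlinarith, by linarith⟩
  · rintro ⟨hw12, hw1, hw2⟩
    have hw1' : 0 ≤ w.1 := by nlinarith
    have hlt : w.1 < 1 := lt_of_le_of_ne (by nlinarith) hw
    exact ⟨(hle hlt).2 (by linarith), hw1', by nlinarith, by linarith⟩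

theorem restrict_axisHeight_le :
    μT.restrict {w | axisHeight z ≤ axisHeight w} =
      ENNReal.ofReal (upperArea z) • μT.map (triangleMap (0, axisHeight z) z (0, 1)) +
        (2 : ENNReal) • volume.restrict (convexHull ℝ {z, (1, 0), (0, 1)}) := by
  have hmeas : MeasurableSet {w | axisHeight z ≤ axisHeight w} :=
    measurableSet_le measurable_const measurable_axisHeight
  have hpos : 0 < orient (0, axisHeight z) z (0, 1) := by
    rw [orient_upper]
    exact hz.upperArea_pos
  rw [← orient_upper z, ← restrict_convexHull_triple hpos, μT, Measure.restrict_smul,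
    Measure.restrict_restrict hmeas, Measure.restrict_congr_set hz.inter_T_ae_eq_convexHull,
    convexHull_triple_eq_union hz.mem_segment,
    Measure.restrict_union₀ (aedisjoint_convexHull_triple hz.mem_segment)
      (measurableSet_convexHull_triple _ _ _).nullMeasurableSet, smul_add]

theorem two_smul_restrict_lower_univ :
    ((2 : ENNReal) • volume.restrict (convexHull ℝ {z, (1, 0), (0, 1)})) Set.univ =
      ENNReal.ofReal (lowerArea z) := by
  rw [Measure.smul_apply, Measure.restrict_apply_univ, smul_eq_mul,
    two_mul_volume_convexHull_triple, orient_lower, abs_of_pos hz.lowerArea_pos]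

theorem chainHull_insert_image {s : Set (ℝ × ℝ)} (hs : s ⊆ T) :
    chainHull (insert z (triangleMap (0, axisHeight z) z (0, 1) '' s)) =
      triangleMap (0, axisHeight z) z (0, 1) '' chainHull s ∪
        convexHull ℝ {z, (1, 0), (0, 1)} := by
  set Φ := triangleMap (0, axisHeight z) z (0, 1) with hΦ
  have hcorners : Φ '' {(1, 0), (0, 1)} = {z, (0, 1)} := by
    simp [hΦ, Set.image_insert_eq, triangleMap_apply, Prod.mk_zero_zero]
  have himage : Φ '' chainHull s = convexHull ℝ (Φ '' s ∪ {z, (0, 1)}) := by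
    rw [chainHull, AffineMap.image_convexHull, Set.image_union, hcorners]
  have hz_mem : z ∈ Φ '' chainHull s := himage ▸ subset_convexHull ℝ _ (by simp)
  have htop_mem : (0, 1) ∈ Φ '' chainHull s := himage ▸ subset_convexHull ℝ _ (by simp)
  have hsub : Φ '' chainHull s ⊆ convexHull ℝ {(0, axisHeight z), z, (0, 1)} := by
    rw [← image_triangleMap_T]
    exact Set.image_mono (chainHull_subset_T hs)
  have hconvex : Convex ℝ (Φ '' chainHull s) := (convex_convexHull ℝ _).affine_image Φ
  rw [← convexHull_insert_eq_union_triangle hconvex hz.mem_segment hz_mem htop_mem hsub, himage,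
    convexHull_insert_convexHull, chainHull]
  congr 1
  grind

theorem chainArea_insert_image {s : Set (ℝ × ℝ)} (hs : s ⊆ T) :
    chainArea (insert z (triangleMap (0, axisHeight z) z (0, 1) '' s)) =
      ENNReal.ofReal (lowerArea z) + ENNReal.ofReal (upperArea z) * chainArea s := by
  have hdisj : AEDisjoint volume (triangleMap (0, axisHeight z) z (0, 1) '' chainHull s)
      (convexHull ℝ {z, (1, 0), (0, 1)}) := by
    refine (aedisjoint_convexHull_triple hz.mem_segment).mono ?_ subset_rfl
    rw [← image_triangleMap_T]
    exact Set.image_mono (chainHull_subset_T hs)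
  rw [chainArea, hz.chainHull_insert_image hs,
    measure_union₀ (measurableSet_convexHull_triple _ _ _).nullMeasurableSet hdisj, mul_add,
    two_mul_volume_convexHull_triple, addHaar_image_affineMap, det_triangleMap_linear,
    orient_upper, orient_lower, abs_of_pos hz.upperArea_pos, abs_of_pos hz.lowerArea_pos,
    mul_left_comm, add_comm, chainArea]

theorem sampleLIntegral_image_chainArea_pow (k n : ℕ) :
    sampleLIntegral μT n
        (fun s => chainArea (insert z (triangleMap (0, axisHeight z) z (0, 1) '' s)) ^ k) =
      ∑ l ∈ Finset.range (k + 1), (k.choose l : ENNReal) *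
        (ENNReal.ofReal (upperArea z) ^ l * ENNReal.ofReal (lowerArea z) ^ (k - l)) *
        sampleLIntegral μT n (fun s => chainArea s ^ l) := by
  rw [← sampleLIntegral_sum_mul μT n _ _ fun l _ => sampleMeasurable_chainArea_pow l]
  refine sampleLIntegral_congr_of_ae_mem ae_mem_T n fun s hs => ?_
  rw [hz.chainArea_insert_image hs, add_comm, add_pow]
  exact Finset.sum_congr rfl fun l _ => by rw [mul_pow]; ring

theorem sampleLIntegral_restrict_chainArea_pow (k n : ℕ) :
    sampleLIntegral (μT.restrict {w | axisHeight z ≤ axisHeight w}) n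
        (fun s => chainArea (insert z s) ^ k) =
      ∑ m ∈ Finset.range (n + 1), ∑ l ∈ Finset.range (k + 1),
        (n.choose m * k.choose l : ENNReal) *
          ENNReal.ofReal (upperArea z ^ (m + l) * lowerArea z ^ (n - m + (k - l))) *
          sampleLIntegral μT m (fun s => chainArea s ^ l) := by
  set Φ := triangleMap (0, axisHeight z) z (0, 1)
  have hu := hz.upperArea_pos.le
  have ht := hz.lowerArea_pos.le
  have hΦ : Measurable Φ := Φ.continuous_of_finiteDimensional.measurable
  have hfin₁ : IsFiniteMeasure (ENNReal.ofReal (upperArea z) • μT.map Φ) :=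
    Measure.smul_finite _ ENNReal.ofReal_ne_top
  have hfin₂ : IsFiniteMeasure
      ((2 : ENNReal) • volume.restrict (convexHull ℝ {z, (1, 0), (0, 1)})) :=
    ⟨by rw [hz.two_smul_restrict_lower_univ]; exact ENNReal.ofReal_lt_top⟩
  have hmeas := (sampleMeasurable_chainArea_pow k).comp_insert z
  have habs : ∀ᵐ x ∂(2 : ENNReal) • volume.restrict (convexHull ℝ {z, (1, 0), (0, 1)}),
      ∀ s, chainArea (insert z (insert x s)) ^ k = chainArea (insert z s) ^ k := by
    refine Measure.ae_smul_measure ?_ 2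
    filter_upwards [ae_restrict_mem (measurableSet_convexHull_triple _ _ _)] with x hx s
    rw [Set.insert_comm, chainArea_insert_of_mem (convexHull_mono (by grind) hx)]
  rw [hz.restrict_axisHeight_le, sampleLIntegral_add_of_absorbed hmeas _ _ habs n]
  refine Finset.sum_congr rfl fun m _ => ?_
  rw [hz.two_smul_restrict_lower_univ,
    sampleLIntegral_smul_map hmeas μT hΦ ENNReal.ofReal_ne_top m,
    hz.sampleLIntegral_image_chainArea_pow k m, Finset.mul_sum, Finset.mul_sum, Finset.mul_sum]
  refine Finset.sum_congr rfl fun l _ => ?_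
  rw [ENNReal.ofReal_mul (by positivity), ENNReal.ofReal_pow hu, ENNReal.ofReal_pow ht]
  ring

end IsGeneric

theorem sampleLIntegral_chainArea_pow_succ (k n : ℕ) :
    sampleLIntegral μT (n + 1) (fun s => chainArea s ^ k) =
      (n + 1) * ∑ m ∈ Finset.range (n + 1), ∑ l ∈ Finset.range (k + 1),
        (n.choose m * k.choose l : ENNReal) *
          ENNReal.ofReal (areaMoment (m + l) (n - m + (k - l))) *
          sampleLIntegral μT m (fun s => chainArea s ^ l) := by
  rw [sampleLIntegral_succ_eq_argmin (sampleMeasurable_chainArea_pow k) μT measurable_axisHeight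
    μT_axisHeight_eq n, lintegral_congr_ae (ae_isGeneric.mono fun z hz =>
      hz.sampleLIntegral_restrict_chainArea_pow k n),
    lintegral_finsetSum _ fun m _ => by fun_prop]
  refine congrArg _ (Finset.sum_congr rfl fun m _ => ?_)
  rw [lintegral_finsetSum _ fun l _ => by fun_prop]
  refine Finset.sum_congr rfl fun l _ => ?_
  rw [lintegral_mul_const _ (by fun_prop), lintegral_const_mul _ (by fun_prop), lintegral_areas]

theorem sampleLIntegral_chainArea_pow_ne_top (n k : ℕ) :
    sampleLIntegral μT n (fun s => chainArea s ^ k) ≠ ⊤ := by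
  refine ne_top_of_le_ne_top (b := ∫⁻ _, 1 ∂P n) (by simp) (lintegral_mono_ae ?_)
  filter_upwards [ae_range_subset ae_mem_T n] with ω hω
  exact pow_le_one' (chainArea_le_one hω) k

theorem integral_V_pow (n k : ℕ) :
    ∫ ω, V n ω ^ k ∂P n = (sampleLIntegral μT n fun s => chainArea s ^ k).toReal := by
  simp only [V_eq_toReal_chainArea, ← ENNReal.toReal_pow]
  refine integral_toReal (sampleMeasurable_chainArea_pow k n).aemeasurable ?_
  filter_upwards [ae_range_subset ae_mem_T n] with ω hω
  exact (pow_le_one' (chainArea_le_one hω) k).trans_lt ENNReal.one_lt_top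

theorem integral_V_pow_succ (n k : ℕ) :
    ∫ ω, V (n + 1) ω ^ k ∂P (n + 1) =
      (n + 1) * ∑ m ∈ Finset.range (n + 1), ∑ l ∈ Finset.range (k + 1),
        (n.choose m * k.choose l * areaMoment (m + l) (n - m + (k - l))) *
          ∫ ω, V m ω ^ l ∂P m := by
  have hterm (m l : ℕ) : (n.choose m * k.choose l : ENNReal) *
      ENNReal.ofReal (areaMoment (m + l) (n - m + (k - l))) *
        sampleLIntegral μT m (fun s => chainArea s ^ l) ≠ ⊤ :=
    ENNReal.mul_ne_top (by finiteness) (sampleLIntegral_chainArea_pow_ne_top m l)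
  simp only [integral_V_pow]
  rw [sampleLIntegral_chainArea_pow_succ, ENNReal.toReal_mul,
    ENNReal.toReal_sum fun m _ => ENNReal.sum_ne_top.2 fun l _ => hterm m l]
  simp only [ENNReal.toReal_sum fun l _ => hterm _ l, ENNReal.toReal_mul,
    ENNReal.toReal_ofReal (areaMoment_nonneg _ _), ENNReal.toReal_natCast,
    ENNReal.toReal_add (ENNReal.natCast_ne_top n) ENNReal.one_ne_top, ENNReal.toReal_one]

end Chain

section PartialSums

variable {M : Type*} [AddCommMonoid M]

/-- The sequence of partial sums `f 0 + ⋯ + f n`; its iterates express convolution with the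
coefficients of the powers of `1 / (1 - x)`. -/
def partialSum (f : ℕ → M) (n : ℕ) : M := ∑ m ∈ Finset.range (n + 1), f m

theorem iterate_partialSum_zero (b : ℕ) (f : ℕ → M) : partialSum^[b] f 0 = f 0 := by
  induction b with
  | zero => rfl
  | succ b ih => rw [Function.iterate_succ_apply', partialSum, Finset.sum_range_one, ih]

theorem iterate_partialSum_succ (b : ℕ) (f : ℕ → M) (n : ℕ) :
    partialSum^[b + 1] f (n + 1) = partialSum^[b + 1] f n + partialSum^[b] f (n + 1) := by
  simp only [Function.iterate_succ_apply', partialSum, Finset.sum_range_succ _ (n + 1)]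

theorem iterate_partialSum_eq_sum_choose (b : ℕ) (f : ℕ → M) (n : ℕ) :
    partialSum^[b + 1] f n = ∑ m ∈ Finset.range (n + 1), (n - m + b).choose b • f m := by
  induction b generalizing n with
  | zero => simp [partialSum]
  | succ b ihb =>
    induction n with
    | zero => simp [iterate_partialSum_zero]
    | succ n ihn =>
      rw [iterate_partialSum_succ, ihn, ihb, Finset.sum_range_succ _ (n + 1),
        Finset.sum_range_succ _ (n + 1), ← add_assoc, ← Finset.sum_add_distrib]
      congr 1
      · refine Finset.sum_congr rfl fun m hm => ?_
        have hmn : n + 1 - m = n - m + 1 := Nat.succ_sub (Finset.mem_range_succ_iff.1 hm)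
        rw [hmn, show n - m + 1 + (b + 1) = n - m + 1 + b + 1 by ring, Nat.choose_succ_succ,
          add_smul, add_comm, add_right_comm (n - m) 1 b, add_assoc (n - m) b 1]
      · simp

theorem iterate_partialSum_one {R : Type*} [NonAssocSemiring R] (b n : ℕ) :
    partialSum^[b] (fun _ => (1 : R)) n = (n + b).choose b := by
  induction b generalizing n with
  | zero => simp
  | succ b ihb =>
    induction n with
    | zero => simp [iterate_partialSum_zero]
    | succ n ihn =>
      rw [iterate_partialSum_succ, ihn, ihb, show n + 1 + (b + 1) = n + (b + 1) + 1 by ring,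
        Nat.choose_succ_succ, add_comm, add_right_comm n 1 b, ← add_assoc n b 1, Nat.cast_add]

end PartialSums

section Moments

theorem q_fst_zero (k : ℕ) : q 0 k = 0 ^ k := by
  have hV (ω : Fin 0 → ℝ × ℝ) : V 0 ω = 0 := by
    rw [V_eq_toReal_chainArea, Set.range_eq_empty, chainArea_empty, ENNReal.toReal_zero]
  simp [q, hV]

theorem q_snd_zero (n : ℕ) : q n 0 = 1 := by
  simp [q]

theorem integral_V_pow_eq_q_div (n k : ℕ) : ∫ ω, V n ω ^ k ∂P n = q n k / (n + k).choose k := by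
  have h : ((n + k).choose k : ℝ) ≠ 0 := by
    exact_mod_cast (Nat.choose_pos (Nat.le_add_left k n)).ne'
  rw [q, mul_div_cancel_left₀ _ h]

theorem cast_add_choose_right (i j : ℕ) :
    ((i + j).choose j : ℝ) = (i + j).factorial / (i.factorial * j.factorial) := by
  rw [← Nat.choose_symm_add, Nat.cast_add_choose]

theorem q_succ_coeff {n m k l : ℕ} (hm : m ≤ n) (hl : l ≤ k) :
    (n + k + 1) * (n + k + 2) * ((n + 1 + k).choose k * ((n + 1) * (n.choose m * k.choose l *
      areaMoment (m + l) (n - m + (k - l)) / (m + l).choose l))) =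
      2 * ((k - l + 1 : ℕ) * ((n - m + (k - l + 1)).choose (k - l + 1) : ℝ)) := by
  obtain ⟨a, rfl⟩ := Nat.exists_eq_add_of_le' hm
  obtain ⟨b, rfl⟩ := Nat.exists_eq_add_of_le' hl
  simp only [Nat.add_sub_cancel, areaMoment, cast_add_choose_right]
  rw [show a + m + 1 + (b + l) = m + l + (a + b) + 1 by ring, Nat.factorial_succ (a + m),
    Nat.factorial_succ (m + l + (a + b) + 1), Nat.factorial_succ b,
    show a + (b + 1) = a + b + 1 by ring]
  push_cast
  field_simp
  ring

theorem q_succ (n k : ℕ) :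
    (n + k + 1) * (n + k + 2) * q (n + 1) k = 2 * ∑ l ∈ Finset.range (k + 1),
      (k - l + 1 : ℕ) * partialSum^[k - l + 2] (fun m => q m l) n := by
  rw [q, integral_V_pow_succ]
  simp only [integral_V_pow_eq_q_div, iterate_partialSum_eq_sum_choose, Finset.mul_sum]
  rw [Finset.sum_comm]
  refine Finset.sum_congr rfl fun l hl => Finset.sum_congr rfl fun m hm => ?_
  have hcoeff := q_succ_coeff (Finset.mem_range_succ_iff.1 hm) (Finset.mem_range_succ_iff.1 hl)
  rw [nsmul_eq_mul]
  linear_combination q m l * hcoeff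

theorem q_succ_sub (n k : ℕ) :
    (n + k + 1) * (n + k + 2) * q (n + 1) k - (n + k) * (n + k + 1) * q n k =
      2 * ∑ l ∈ Finset.range (k + 1),
        (k - l + 1 : ℕ) * partialSum^[k - l + 1] (fun m => q m l) n := by
  rcases n with _ | n
  · rw [q_succ]
    simp only [iterate_partialSum_zero, q_fst_zero]
    rcases k with _ | k <;> simp
  · have h := q_succ n k
    have h' := q_succ (n + 1) k
    simp only [iterate_partialSum_succ _ _ n, mul_add _ (partialSum^[_ + 1] _ n),
      Finset.sum_add_distrib] at h' ⊢
    push_cast at h h' ⊢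
    linear_combination h' - h

theorem q_second_difference (n k : ℕ) :
    (n + k + 2) * (n + k + 3) * q (n + 2) k - 2 * ((n + k + 1) * (n + k + 2) * q (n + 1) k) +
        (n + k) * (n + k + 1) * q n k =
      2 * ∑ l ∈ Finset.range (k + 1),
        (k - l + 1 : ℕ) * partialSum^[k - l] (fun m => q m l) (n + 1) := by
  have h := q_succ_sub n k
  have h' := q_succ_sub (n + 1) k
  simp only [iterate_partialSum_succ, mul_add _ (partialSum^[_] _ n), Finset.sum_add_distrib] at h'
  push_cast at h h' ⊢
  linear_combination h' - h

theorem H_succ (j : ℕ) : H (j + 1) = H j + 1 / (j + 1) := Finset.sum_range_succ _ j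

theorem H2_succ (j : ℕ) : H2 (j + 1) = H2 j + 1 / (j + 1) ^ 2 := Finset.sum_range_succ _ j

theorem q_snd_one (n : ℕ) : q n 1 = n + 2 / 3 - 2 / 3 * H (n + 1) := by
  induction n using Nat.twoStepInduction with
  | zero => norm_num [q_fst_zero, H]
  | one =>
    have h := q_succ_sub 0 1
    norm_num [Finset.sum_range_succ, iterate_partialSum_zero, q_fst_zero, H] at h ⊢
    linarith
  | more n ih ih' =>
    have hrec : (n + 3) * (n + 4) * q (n + 2) 1 =
        2 * ((n + 2) * (n + 3) + 1) * q (n + 1) 1 - (n + 1) * (n + 2) * q n 1 + 4 * (n + 2) := by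
      have h := q_second_difference n 1
      simp only [Finset.sum_range_succ, Finset.sum_range_zero, q_snd_zero, Nat.sub_zero,
        Nat.sub_self, iterate_partialSum_one, Function.iterate_zero_apply,
        Nat.choose_one_right] at h
      push_cast at h
      linear_combination h
    rw [← mul_right_inj' (by positivity : ((n : ℝ) + 3) * (n + 4) ≠ 0), hrec, ih, ih',
      H_succ (n + 2), H_succ (n + 1)]
    push_cast
    field_simp
    ring

theorem partialSum_q_snd_one (n : ℕ) :
    partialSum (fun m => q m 1) n = (n + 1) * (3 * n + 8) / 6 - 2 / 3 * (n + 2) * H (n + 1) := by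
  simp only [partialSum, q_snd_one]
  induction n with
  | zero => norm_num [H]
  | succ n ih =>
    rw [Finset.sum_range_succ, ih, H_succ (n + 1)]
    push_cast
    field_simp
    ring

theorem q_snd_two (n : ℕ) :
    q n 2 = (n + 1) * (n + 2) / 2 - (18 * n ^ 2 + 106 * n + 144) / (54 * (n + 3)) -
      (18 * n + 16) / 27 * H (n + 2) + 2 / 9 * (H (n + 2) ^ 2 + H2 (n + 2)) := by
  induction n using Nat.twoStepInduction with
  | zero => norm_num [q_fst_zero, H, H2, Finset.sum_range_succ]
  | one =>
    have h := q_succ_sub 0 2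
    norm_num [Finset.sum_range_succ, iterate_partialSum_zero, q_fst_zero, H, H2] at h ⊢
    linarith
  | more n ih ih' =>
    have hrec : (n + 4) * (n + 5) * q (n + 2) 2 =
        2 * ((n + 3) * (n + 4) + 1) * q (n + 1) 2 - (n + 2) * (n + 3) * q n 2 +
          3 * (n + 3) * (n + 2) + 4 * partialSum (fun m => q m 1) (n + 1) := by
      have h := q_second_difference n 2
      simp only [Finset.sum_range_succ, Finset.sum_range_zero, q_snd_zero, Nat.sub_zero,
        Nat.sub_self, iterate_partialSum_one, Function.iterate_zero_apply, Nat.cast_choose_two,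
        show 2 - 1 = 1 from rfl, Function.iterate_one] at h
      push_cast at h
      linear_combination h
    rw [← mul_right_inj' (by positivity : ((n : ℝ) + 4) * (n + 5) ≠ 0), hrec, ih, ih',
      partialSum_q_snd_one, show n + 1 + 2 = n + 2 + 1 by ring, show n + 1 + 1 = n + 2 by ring,
      show n + 2 + 2 = n + 2 + 1 + 1 by ring, H_succ (n + 2 + 1), H_succ (n + 2),
      H2_succ (n + 2 + 1), H2_succ (n + 2)]
    push_cast
    field_simp
    ring

end Moments

/-- exact formula for the second moment of the area. -/
theorem stmt14 (n : ℕ) :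
    (∫ ω, (volume (Tchain n ω)).toReal ^ 2 ∂ P n
        = 1 / 4 - (9 * (n : ℝ) ^ 2 + 53 * n + 72) /
            (54 * ((n : ℝ) + 1) * ((n : ℝ) + 2) * ((n : ℝ) + 3))
          - (9 * (n : ℝ) + 8) * H (n + 2) / (27 * ((n : ℝ) + 1) * ((n : ℝ) + 2))
          + (H (n + 2) ^ 2 + H2 (n + 2)) / (9 * ((n : ℝ) + 1) * ((n : ℝ) + 2))) ∧
    (∫ ω, (V n ω) ^ 2 ∂ P n
        = 1 - (18 * (n : ℝ) ^ 2 + 106 * n + 144) /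
            (27 * ((n : ℝ) + 1) * ((n : ℝ) + 2) * ((n : ℝ) + 3))
          - (36 * (n : ℝ) + 32) * H (n + 2) / (27 * ((n : ℝ) + 1) * ((n : ℝ) + 2))
          + 4 * (H (n + 2) ^ 2 + H2 (n + 2)) / (9 * ((n : ℝ) + 1) * ((n : ℝ) + 2))) := by
  have hV : ∫ ω, V n ω ^ 2 ∂P n = q n 2 / ((n + 1) * (n + 2) / 2) := by
    rw [integral_V_pow_eq_q_div, Nat.cast_choose_two]
    push_cast
    ring
  have hvol : ∫ ω, (volume (Tchain n ω)).toReal ^ 2 ∂P n = (∫ ω, V n ω ^ 2 ∂P n) / 4 := by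
    rw [← integral_div]
    refine integral_congr_ae (.of_forall fun ω => ?_)
    simp only [V]
    ring
  rw [hvol, hV, q_snd_two]
  constructor <;> (field_simp; ring)

end
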